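/- arXiv:math/0108034 — 4 statements merged into one kernel-verified Lean document; each statement's English description precedes it below -/
import Mathlib

section
/- Let k be an algebraically closed field, B ⊂ A algebras over k, V a finite-dimensional simple B-module which is A-stable (i.e., V↑^A restricted to B is isomorphic to a finite direct sum of copies of V), and E = End_A(V↑^A)^op. Then the map V ⊗_k E → V↑^A sending v ⊗ f to f(1 ⊗ v) is an isomorphism which is both left B-linear and right E-linear, where B acts only on the left factor and E acts only on the right factor of V ⊗_k E. -/
/-! The universal property of induction identifies `E = End_A(V↑)` with `Hom_B(V, V↑)`, an
endomorphism `e` corresponding to `v ↦ e(1 ⊗ v)`; under this identification the map of the theorem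
is evaluation `V ⊗ Hom_B(V, V↑) → V↑`. By stability `V↑ ≅ Vⁿ` over `B`, and Schur's lemma over the
algebraically closed field `k` gives `End_B(V) = k`, so `Hom_B(V, V↑) ≅ kⁿ` (`scalarEquiv`). The
evaluation map then becomes the canonical isomorphism `V ⊗ kⁿ ≅ Vⁿ`. Right `E`-linearity is
immediate, multiplication in `E` being composition in the opposite order. -/

open TensorProduct Pointwise MulOpposite

set_option synthInstance.maxHeartbeats 1000000
set_option maxHeartbeats 2000000

noncomputable section

/-- The left module structure of `E = End_A(M)ᵐᵒᵖ` on `Hom_A(M,N)`, given by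
precomposition: `e • f = f ∘ e.unop`. -/
instance endOpModuleHom (A M N : Type*) [Ring A] [AddCommGroup M] [Module A M]
    [AddCommGroup N] [Module A N] : Module (Module.End A M)ᵐᵒᵖ (M →ₗ[A] N) where
  smul e f := f ∘ₗ e.unop
  one_smul f := rfl
  mul_smul e₁ e₂ f := rfl
  smul_zero e := rfl
  smul_add e f g := rfl
  add_smul e₁ e₂ f := by ext m; simp [HSMul.hSMul, SMul.smul]
  zero_smul f := by ext m; simp [HSMul.hSMul, SMul.smul]

theorem endOp_smul_hom_apply {A M N : Type*} [Ring A] [AddCommGroup M] [Module A M]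
    [AddCommGroup N] [Module A N] (e : (Module.End A M)ᵐᵒᵖ) (f : M →ₗ[A] N) (m : M) :
    (e • f) m = f (e.unop m) := rfl

section Bal

variable (S : Type*) [Ring S] (Amb : Type*) [Ring Amb]
variable (M U : Type*) [AddCommGroup M] [AddCommGroup U]
variable [Module S M] [Module Amb M] [Module Sᵐᵒᵖ U]

/-- The relations defining the balanced tensor product `M ⊗_{Sᵐᵒᵖ} U` of the
right `Sᵐᵒᵖ`-module `M` (i.e. left `S`-module) with the left `Sᵐᵒᵖ`-module `U`:
the elements `(m·s) ⊗ u - m ⊗ (s·u)`.  The ambient ring `Amb` acts on `M`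
commuting with `S`, so the span over `Amb` coincides with the span over `ℤ`. -/
def balRel : Submodule Amb (M ⊗[ℤ] U) :=
  Submodule.span Amb
    {x | ∃ (s : S) (m : M) (u : U),
      x = (s • m) ⊗ₜ[ℤ] u - m ⊗ₜ[ℤ] ((MulOpposite.op s) • u)}

/-- The balanced tensor product `M ⊗_{Sᵐᵒᵖ} U`, as an `Amb`-module. -/
def BalT := (M ⊗[ℤ] U) ⧸ balRel S Amb M U

instance : AddCommGroup (BalT S Amb M U) :=
  inferInstanceAs (AddCommGroup ((M ⊗[ℤ] U) ⧸ balRel S Amb M U))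

instance : Module Amb (BalT S Amb M U) :=
  inferInstanceAs (Module Amb ((M ⊗[ℤ] U) ⧸ balRel S Amb M U))

instance (R : Type*) [Semiring R] [SMul R Amb] [Module R (M ⊗[ℤ] U)]
    [IsScalarTower R Amb (M ⊗[ℤ] U)] : Module R (BalT S Amb M U) :=
  inferInstanceAs (Module R ((M ⊗[ℤ] U) ⧸ balRel S Amb M U))

instance (R : Type*) [Semiring R] [SMul R Amb] [Module R (M ⊗[ℤ] U)]
    [IsScalarTower R Amb (M ⊗[ℤ] U)] : IsScalarTower R Amb (BalT S Amb M U) :=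
  inferInstanceAs (IsScalarTower R Amb ((M ⊗[ℤ] U) ⧸ balRel S Amb M U))

/-- The class of `m ⊗ u` in the balanced tensor product. -/
def BalT.mk (m : M) (u : U) : BalT S Amb M U :=
  Submodule.Quotient.mk (m ⊗ₜ[ℤ] u)

end Bal

section PhiPsi

variable (A M : Type*) [Ring A] [AddCommGroup M] [Module A M]

/-- Evaluation `m ↦ (f ↦ f m)`, as an `A`-linear map into `ℤ`-linear maps. -/
def evMap (N : Type*) [AddCommGroup N] [Module A N] :
    M →ₗ[A] ((M →ₗ[A] N) →ₗ[ℤ] N) where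
  toFun m :=
    { toFun := fun f => f m
      map_add' := fun _ _ => rfl
      map_smul' := fun _ _ => rfl }
  map_add' m₁ m₂ := by ext f; exact f.map_add _ _
  map_smul' a m := by ext f; exact f.map_smul a m

/-- The canonical `A`-linear map `φ : M ⊗_E Hom_A(M,N) → N`, `φ(m ⊗ f) = f m`,
where `E = End_A(M)ᵐᵒᵖ`.  `N` is static with respect to `M` iff `φ` is an
isomorphism, i.e. iff `φ` is bijective. -/
def phiMap (N : Type*) [AddCommGroup N] [Module A N] :
    BalT (Module.End A M) A M (M →ₗ[A] N) →ₗ[A] N :=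
  Submodule.liftQ _ (TensorProduct.AlgebraTensorModule.lift (evMap A M N)) (by
    rw [balRel, Submodule.span_le]
    rintro x ⟨s, m, f, rfl⟩
    simp only [SetLike.mem_coe, LinearMap.mem_ker, map_sub]
    have h1 : (TensorProduct.AlgebraTensorModule.lift (evMap A M N)) ((s • m) ⊗ₜ[ℤ] f)
        = f (s • m) := rfl
    have h2 : (TensorProduct.AlgebraTensorModule.lift (evMap A M N))
        (m ⊗ₜ[ℤ] ((MulOpposite.op s) • f)) = f (s m) := rfl
    rw [h1, h2]
    exact sub_self _)

theorem phiMap_mk (N : Type*) [AddCommGroup N] [Module A N] (m : M) (f : M →ₗ[A] N) :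
    phiMap A M N (BalT.mk _ _ _ _ m f) = f m := rfl

/-- `m ↦ m ⊗ u`, as an `A`-linear map `M → M ⊗[ℤ] U`. -/
def tmulRight (U : Type*) [AddCommGroup U] (u : U) : M →ₗ[A] (M ⊗[ℤ] U) where
  toFun m := m ⊗ₜ[ℤ] u
  map_add' _ _ := TensorProduct.add_tmul _ _ _
  map_smul' a m := (TensorProduct.smul_tmul' a m u).symm

/-- The canonical map `ψ : U → Hom_A(M, M ⊗_E U)`, `ψ(u)(m) = m ⊗ u`, for a left
`E`-module `U`, where `E = End_A(M)ᵐᵒᵖ`.  `U` is static with respect to `M` iff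
`ψ` is an isomorphism of `E`-modules. -/
def psiMap (U : Type*) [AddCommGroup U] [Module (Module.End A M)ᵐᵒᵖ U] :
    U → (M →ₗ[A] BalT (Module.End A M) A M U) := fun u =>
  (balRel (Module.End A M) A M U).mkQ ∘ₗ tmulRight A M U u

end PhiPsi

section Ind

variable {Bc Sc : Type*} [Ring Bc] [Ring Sc] (f : Bc →+* Sc)
variable (V : Type*) [AddCommGroup V] [Module Bc V]

/-- The relations defining the induced module `V↑ = Sc ⊗_{Bc} V` along the ring
homomorphism `f : Bc →+* Sc`: the elements `(s·f(b)) ⊗ v - s ⊗ (b·v)`. -/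
def indRel : Submodule Sc (Sc ⊗[ℤ] V) :=
  Submodule.span Sc
    {x | ∃ (s : Sc) (b : Bc) (v : V), x = (s * f b) ⊗ₜ[ℤ] v - s ⊗ₜ[ℤ] (b • v)}

/-- The induced module `V↑ = Sc ⊗_{Bc} V` along `f : Bc →+* Sc`, with the ring
`Sc` acting by multiplication on the first factor. -/
def Ind := (Sc ⊗[ℤ] V) ⧸ indRel f V

instance : AddCommGroup (Ind f V) :=
  inferInstanceAs (AddCommGroup ((Sc ⊗[ℤ] V) ⧸ indRel f V))

instance : Module Sc (Ind f V) :=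
  inferInstanceAs (Module Sc ((Sc ⊗[ℤ] V) ⧸ indRel f V))

instance (R : Type*) [Semiring R] [SMul R Sc] [Module R (Sc ⊗[ℤ] V)]
    [IsScalarTower R Sc (Sc ⊗[ℤ] V)] : Module R (Ind f V) :=
  inferInstanceAs (Module R ((Sc ⊗[ℤ] V) ⧸ indRel f V))

instance (R : Type*) [Semiring R] [SMul R Sc] [Module R (Sc ⊗[ℤ] V)]
    [IsScalarTower R Sc (Sc ⊗[ℤ] V)] : IsScalarTower R Sc (Ind f V) :=
  inferInstanceAs (IsScalarTower R Sc ((Sc ⊗[ℤ] V) ⧸ indRel f V))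

/-- The class of `s ⊗ v` in the induced module. -/
def Ind.mk (s : Sc) (v : V) : Ind f V := Submodule.Quotient.mk (s ⊗ₜ[ℤ] v)

/-- The canonical map `V → V↑`, `v ↦ 1 ⊗ v`. -/
def Ind.of (v : V) : Ind f V := Ind.mk f V 1 v

end Ind

section StabMap

variable (k : Type*) [Field k] (A : Type*) [Ring A] [Algebra k A] (B : Subalgebra k A)
variable (V : Type*) [AddCommGroup V] [Module k V] [Module ↥B V] [IsScalarTower k ↥B V]

/-- `v ↦ (e ↦ e(1 ⊗ v))`, as a `B`-linear map into `k`-linear maps on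
`E = End_A(V↑^A)ᵒᵖ`. -/
def stabAux : V →ₗ[↥B]
    ((Module.End A (Ind B.val.toRingHom V))ᵐᵒᵖ →ₗ[k] (Ind B.val.toRingHom V)) where
  toFun v :=
    { toFun := fun e => e.unop (Ind.of B.val.toRingHom V v)
      map_add' := fun _ _ => rfl
      map_smul' := fun _ _ => rfl }
  map_add' v w := by
    ext e
    show e.unop (Ind.of B.val.toRingHom V (v + w)) = e.unop _ + e.unop _
    rw [show Ind.of B.val.toRingHom V (v + w)
        = Ind.of B.val.toRingHom V v + Ind.of B.val.toRingHom V w by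
      show Submodule.Quotient.mk ((1 : A) ⊗ₜ[ℤ] (v + w)) = _
      rw [TensorProduct.tmul_add]
      show Submodule.Quotient.mk (((1 : A) ⊗ₜ[ℤ] v) + ((1 : A) ⊗ₜ[ℤ] w))
        = Submodule.Quotient.mk ((1 : A) ⊗ₜ[ℤ] v) + Submodule.Quotient.mk ((1 : A) ⊗ₜ[ℤ] w)
      exact Submodule.Quotient.mk_add _, map_add]
  map_smul' b v := by
    ext e
    show e.unop (Ind.of B.val.toRingHom V (b • v))
      = ((b : A) • e.unop (Ind.of B.val.toRingHom V v) : Ind B.val.toRingHom V)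
    rw [← map_smul,
      show (b : A) • Ind.of B.val.toRingHom V v = Ind.of B.val.toRingHom V (b • v) by
        show Submodule.Quotient.mk ((b : A) • ((1 : A) ⊗ₜ[ℤ] v)) = Submodule.Quotient.mk _
        rw [TensorProduct.smul_tmul']
        rw [Submodule.Quotient.eq]
        exact Submodule.subset_span ⟨1, b, v, by simp⟩]

/-- The canonical map `V ⊗_k E → V↑^A`, `v ⊗ e ↦ e(1 ⊗ v)`, where
`E = End_A(V↑^A)ᵒᵖ` and `B` acts only on the left tensor factor. -/
def stabMap : (V ⊗[k] (Module.End A (Ind B.val.toRingHom V))ᵐᵒᵖ) →ₗ[↥B]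
    Ind B.val.toRingHom V :=
  TensorProduct.AlgebraTensorModule.lift (stabAux k A B V)

end StabMap

section IndLemmas

variable {k : Type*} [Field k] {A : Type*} [Ring A] [Algebra k A] {B : Subalgebra k A}
variable {V : Type*} [AddCommGroup V] [Module ↥B V]

theorem ind_subalgebra_smul (b : B) (m : Ind B.val.toRingHom V) : b • m = (b : A) • m := rfl

/-- The elements `1 ⊗ v` generate `V↑` over `A`, so they determine an `A`-linear map. -/
theorem ind_hom_ext {f g : Module.End A (Ind B.val.toRingHom V)}
    (h : ∀ v, f (Ind.of B.val.toRingHom V v) = g (Ind.of B.val.toRingHom V v)) : f = g := by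
  refine Submodule.linearMap_qext _ ?_
  refine TensorProduct.AlgebraTensorModule.ext fun a v => ?_
  have key : (Submodule.Quotient.mk (a ⊗ₜ[ℤ] v) : Ind B.val.toRingHom V)
      = a • Ind.of B.val.toRingHom V v := by
    show Submodule.Quotient.mk _ = Submodule.Quotient.mk (a • ((1 : A) ⊗ₜ[ℤ] v))
    rw [TensorProduct.smul_tmul', smul_eq_mul, mul_one]
  show f (Submodule.Quotient.mk (a ⊗ₜ[ℤ] v)) = g (Submodule.Quotient.mk (a ⊗ₜ[ℤ] v))
  rw [key, map_smul, map_smul, h]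

/-- The `A`-linear extension `a ⊗ v ↦ a • h v` of a `B`-linear map `h : V → V↑`. -/
def indLift (h : V →ₗ[B] Ind B.val.toRingHom V) : Module.End A (Ind B.val.toRingHom V) :=
  Submodule.liftQ _ (TensorProduct.AlgebraTensorModule.lift
    (R := ℤ) (A := A) (M := A) (N := V) (P := Ind B.val.toRingHom V)
    { toFun := fun a => a • (h.toAddMonoidHom.toIntLinearMap)
      map_add' := fun a b => add_smul a b _
      map_smul' := fun a b => mul_smul a b _ }) (by
    rw [indRel, Submodule.span_le]
    rintro x ⟨s, b, v, rfl⟩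
    rw [SetLike.mem_coe, LinearMap.mem_ker, map_sub, sub_eq_zero]
    show (s * (b : A)) • h v = s • h (b • v)
    rw [map_smul, mul_smul, ind_subalgebra_smul])

theorem indLift_of (h : V →ₗ[B] Ind B.val.toRingHom V) (v : V) :
    indLift h (Ind.of B.val.toRingHom V v) = h v :=
  one_smul A (h v)

variable (B V) in
/-- The canonical `B`-linear map `V → V↑`, `v ↦ 1 ⊗ v`. -/
def indOfHom : V →ₗ[B] Ind B.val.toRingHom V where
  toFun := Ind.of B.val.toRingHom V
  map_add' v w := by
    show Submodule.Quotient.mk ((1 : A) ⊗ₜ[ℤ] (v + w)) = _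
    rw [TensorProduct.tmul_add]
    rfl
  map_smul' b v := by
    show Submodule.Quotient.mk _ = Submodule.Quotient.mk ((b : A) • ((1 : A) ⊗ₜ[ℤ] v))
    rw [TensorProduct.smul_tmul', eq_comm, Submodule.Quotient.eq]
    exact Submodule.subset_span ⟨1, b, v, by simp⟩

end IndLemmas

section Schur

variable {k : Type*} [Field k] {A : Type*} [Ring A] [Algebra k A] {B : Subalgebra k A}
variable {V : Type*} [AddCommGroup V] [Module k V] [Module ↥B V] [IsScalarTower k ↥B V] {n : ℕ}

/-- The `B`-linear map `V → Vⁿ`, `v ↦ (aᵢ v)ᵢ`. -/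
def scalarHom (a : Fin n → k) : V →ₗ[B] (Fin n → V) :=
  LinearMap.pi fun i => algebraMap k (Module.End B V) (a i)

/-- Given a `B`-isomorphism `φ : V↑ ≅ Vⁿ`, the `k`-linear map `kⁿ → E` sending `a` to the
endomorphism determined by `1 ⊗ v ↦ φ⁻¹((aᵢ v)ᵢ)`. -/
def scalarEnd (φ : Ind B.val.toRingHom V ≃ₗ[B] (Fin n → V)) :
    (Fin n → k) →ₗ[k] (Module.End A (Ind B.val.toRingHom V))ᵐᵒᵖ where
  toFun a := op (indLift (φ.symm.toLinearMap ∘ₗ scalarHom a))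
  map_add' a b := by
    apply unop_injective
    refine ind_hom_ext fun v => ?_
    rw [unop_add, LinearMap.add_apply]
    simp only [unop_op, indLift_of, LinearMap.comp_apply, LinearEquiv.coe_coe]
    rw [← map_add]
    congr 1
    ext i
    exact add_smul (a i) (b i) v
  map_smul' r a := by
    apply unop_injective
    refine ind_hom_ext fun v => ?_
    rw [unop_smul, LinearMap.smul_apply]
    simp only [unop_op, indLift_of, LinearMap.comp_apply, LinearEquiv.coe_coe, RingHom.id_apply]
    rw [← algebraMap_smul A r (φ.symm (scalarHom a v))]
    have hr : algebraMap k A r • φ.symm (scalarHom (B := B) a v)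
        = algebraMap k B r • φ.symm (scalarHom a v) := rfl
    rw [hr, ← map_smul]
    congr 1
    ext i
    show (r * a i) • v = algebraMap k B r • (a i • v)
    rw [algebraMap_smul, mul_smul]

theorem scalarEnd_of (φ : Ind B.val.toRingHom V ≃ₗ[B] (Fin n → V)) (a : Fin n → k) (v : V) :
    (scalarEnd φ a).unop (Ind.of B.val.toRingHom V v) = φ.symm fun i => a i • v :=
  indLift_of _ v

/-- Schur's lemma: every `B`-linear map `V → V↑ ≅ Vⁿ` has scalar components. -/
theorem scalarEnd_bijective [IsAlgClosed k] [FiniteDimensional k V] [IsSimpleModule B V]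
    (φ : Ind B.val.toRingHom V ≃ₗ[B] (Fin n → V)) : Function.Bijective (scalarEnd φ) := by
  constructor
  · intro a b hab
    have := IsSimpleModule.nontrivial B V
    obtain ⟨v, hv⟩ := exists_ne (0 : V)
    have h := scalarEnd_of φ a v
    rw [hab, scalarEnd_of] at h
    funext i
    exact smul_left_injective k hv (congrFun (φ.symm.injective h) i).symm
  · intro e
    have hs : ∀ i, ∃ c : k, algebraMap k (Module.End B V) c
        = LinearMap.proj i ∘ₗ φ.toLinearMap ∘ₗ
          (e.unop.restrictScalars B) ∘ₗ indOfHom B V :=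
      fun i => (IsSimpleModule.algebraMap_end_bijective_of_isAlgClosed k).surjective _
    choose c hc using hs
    refine ⟨c, unop_injective (ind_hom_ext fun v => ?_)⟩
    rw [scalarEnd_of, LinearEquiv.symm_apply_eq]
    funext i
    exact LinearMap.congr_fun (hc i) v

/-- `E ≅ kⁿ` as a `k`-vector space, for `V` simple with `V↑ ≅ Vⁿ` over `B`. -/
def scalarEquiv [IsAlgClosed k] [FiniteDimensional k V] [IsSimpleModule B V]
    (φ : Ind B.val.toRingHom V ≃ₗ[B] (Fin n → V)) :
    (Fin n → k) ≃ₗ[k] (Module.End A (Ind B.val.toRingHom V))ᵐᵒᵖ :=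
  LinearEquiv.ofBijective (scalarEnd φ) (scalarEnd_bijective φ)

/-- In the coordinates given by `scalarEquiv`, the map `V ⊗ E → V↑` is the canonical isomorphism
`V ⊗ kⁿ ≅ Vⁿ` followed by `φ⁻¹`. -/
theorem stabMap_scalarEquiv [IsAlgClosed k] [FiniteDimensional k V] [IsSimpleModule B V]
    (φ : Ind B.val.toRingHom V ≃ₗ[B] (Fin n → V)) (t : V ⊗[k] (Fin n → k)) :
    stabMap k A B V (TensorProduct.congr (LinearEquiv.refl k V) (scalarEquiv φ) t)
      = φ.symm (TensorProduct.piScalarRight k k V (Fin n) t) := by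
  induction t with
  | zero => simp only [map_zero]
  | add x y hx hy => simp only [map_add, hx, hy]
  | tmul v a =>
    rw [TensorProduct.congr_tmul, TensorProduct.piScalarRight_apply,
      TensorProduct.piScalarRightHom_tmul]
    exact scalarEnd_of φ a v

end Schur

/-- Let `k` be algebraically closed, `B ⊆ A` algebras over `k`,
`V` a finite-dimensional simple `A`-stable `B`-module, `E = End_A(V↑^A)ᵒᵖ`.
The map `V ⊗_k E → V↑^A` sending `v ⊗ f` to `f(1 ⊗ v)` is bijective; it is left
`B`-linear (with `B` acting only on the left factor, as recorded in its type)
and right `E`-linear: `Φ(v ⊗ (f·e)) = Φ(v ⊗ f)·e`, where `E` acts on `V ⊗_k E`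
only on the right factor and on `V↑^A` by `m·e = e(m)`. -/
theorem stmt_5 (k : Type*) [Field k] [IsAlgClosed k]
    (A : Type*) [Ring A] [Algebra k A] (B : Subalgebra k A)
    (V : Type*) [AddCommGroup V] [Module k V] [Module ↥B V] [IsScalarTower k ↥B V]
    [FiniteDimensional k V] [IsSimpleModule ↥B V]
    (hstable : ∃ n : ℕ, Nonempty ((Ind B.val.toRingHom V) ≃ₗ[↥B] (Fin n → V))) :
    Function.Bijective (stabMap k A B V) ∧
      ∀ (v : V) (g e : (Module.End A (Ind B.val.toRingHom V))ᵐᵒᵖ),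
        stabMap k A B V (v ⊗ₜ[k] (g * e)) = e.unop (stabMap k A B V (v ⊗ₜ[k] g)) := by
  refine ⟨?_, fun v g e => rfl⟩
  obtain ⟨n, ⟨φ⟩⟩ := hstable
  rw [← Function.Bijective.of_comp_iff (stabMap k A B V)
    (TensorProduct.congr (LinearEquiv.refl k V) (scalarEquiv φ)).bijective]
  convert φ.symm.bijective.comp (TensorProduct.piScalarRight k k V (Fin n)).bijective using 1
  exact funext (stabMap_scalarEquiv φ)
end
end

section
/- Let k be an algebraically closed field, B ⊂ A algebras over k, V a finite-dimensional simple A-stable B-module, M = V↑^A, and E = End_A(M)^op. Then every finite-dimensional left E-module U is static with respect to M, i.e., the E-module map ψ : U → Hom_A(M, M ⊗_E U) given by ψ(u)(m) = m ⊗ u is an isomorphism. -/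
/-!
The proof identifies `M ⊗_E U` with `V ⊗_k U` as a `B`-module. Fix `M ≅ V^n` over `B`, with
inclusions `j i : V → M` and projections `p i : M → V`. By the universal property of the induced
module, `j i` is the restriction along `ι : v ↦ 1 ⊗ v` of a unique `J i ∈ E`, and by Schur's lemma
the `J i` form a `k`-basis of `E`, since `E ≅ Hom_B(V, M) ≅ k^n`. Hence
`m = ∑ J i (ι (p i m))` and `m ⊗ u = ∑ ι (p i m) ⊗ J i u`.

Instead of building the isomorphism with `V ⊗_k U`, the proof uses its contractions: for a
functional `μ` on `U`, the map `θ μ (m ⊗ u) = ∑ μ (J i u) • p i m` is well defined on `M ⊗_E U`,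
is `B`-linear, and sends `ι v ⊗ u` to `μ u • v`. If `ψ u = 0`, then `μ u = 0` for every `μ`,
so `u = 0`. For a basis `b` of `U`, every `x` in `M ⊗_E U` equals
`∑ ι (θ (b a)* x) ⊗ b a`; for an `A`-linear `g : M → M ⊗_E U`, each `θ (b a)* ∘ g ∘ ι` is a
`B`-endomorphism of `V`, hence a scalar `c a`, and `g = ψ (∑ c a • b a)`.
-/

open TensorProduct Pointwise MulOpposite

set_option synthInstance.maxHeartbeats 1000000
set_option maxHeartbeats 2000000

noncomputable section

/-- Schur's lemma over an algebraically closed field: every endomorphism of a finite-dimensional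
simple module is a scalar. -/
theorem schur_scalar (k : Type*) [Field k] [IsAlgClosed k] {R V : Type*} [Ring R] [Algebra k R]
    [AddCommGroup V] [Module k V] [Module R V] [IsScalarTower k R V]
    [FiniteDimensional k V] [IsSimpleModule R V] (f : V →ₗ[R] V) :
    ∃ c : k, ∀ v, f v = c • v := by
  obtain ⟨c, hc⟩ := (IsSimpleModule.algebraMap_end_bijective_of_isAlgClosed (A := R) (V := V) k).2 f
  exact ⟨c, fun v => by rw [← hc]; rfl⟩

/-- The balancing relation `m·e ⊗ u = m ⊗ e·u`, where the right action of `op e` on `M` is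
evaluation of `e`. -/
theorem balT_relation (A M U : Type*) [Ring A] [AddCommGroup M] [Module A M] [AddCommGroup U]
    [Module (Module.End A M)ᵐᵒᵖ U] (e : Module.End A M) (m : M) (u : U) :
    psiMap A M U u (e m) = psiMap A M U (op e • u) m := by
  refine (Submodule.Quotient.eq _).2 (Submodule.subset_span ⟨e, m, u, rfl⟩)

theorem psiMap_smul (A M U : Type*) [Ring A] [AddCommGroup M] [Module A M] [AddCommGroup U]
    [Module (Module.End A M)ᵐᵒᵖ U] (e : (Module.End A M)ᵐᵒᵖ) (u : U) :
    psiMap A M U (e • u) = e • psiMap A M U u :=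
  LinearMap.ext fun m => (balT_relation A M U e.unop m u).symm

theorem psiMap_add (A M U : Type*) [Ring A] [AddCommGroup M] [Module A M] [AddCommGroup U]
    [Module (Module.End A M)ᵐᵒᵖ U] (u u' : U) :
    psiMap A M U (u + u') = psiMap A M U u + psiMap A M U u' :=
  LinearMap.ext fun m => congrArg (balRel (Module.End A M) A M U).mkQ (TensorProduct.tmul_add m u u')

/-- `ψ` as a homomorphism of additive groups. -/
def psiAddHom (A M U : Type*) [Ring A] [AddCommGroup M] [Module A M] [AddCommGroup U]
    [Module (Module.End A M)ᵐᵒᵖ U] : U →+ (M →ₗ[A] BalT (Module.End A M) A M U) :=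
  AddMonoidHom.mk' (psiMap A M U) (psiMap_add A M U)

theorem balT_induction {A M U : Type*} [Ring A] [AddCommGroup M] [Module A M] [AddCommGroup U]
    [Module (Module.End A M)ᵐᵒᵖ U] {P : BalT (Module.End A M) A M U → Prop}
    (h0 : P 0) (hadd : ∀ x y, P x → P y → P (x + y)) (hmk : ∀ u m, P (psiMap A M U u m))
    (x : BalT (Module.End A M) A M U) : P x := by
  obtain ⟨t, rfl⟩ := Submodule.mkQ_surjective (balRel (Module.End A M) A M U) x
  induction t using TensorProduct.induction_on with
  | zero => rw [map_zero]; exact h0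
  | tmul m u => exact hmk u m
  | add x y hx hy => rw [map_add]; exact hadd _ _ hx hy

/-- Universal property of `M ⊗_E U`: a balanced biadditive map factors through it. -/
theorem balT_exists_lift {A M U : Type*} [Ring A] [AddCommGroup M] [Module A M] [AddCommGroup U]
    [Module (Module.End A M)ᵐᵒᵖ U] {W : Type*} [AddCommGroup W] (f : M →+ U →+ W)
    (hf : ∀ (e : Module.End A M) m u, f (e m) u = f m (op e • u)) :
    ∃ F : BalT (Module.End A M) A M U →+ W, ∀ u m, F (psiMap A M U u m) = f m u := by
  let g : M ⊗[ℤ] U →+ W := TensorProduct.liftAddHom f fun r m u => by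
    rw [map_zsmul, map_zsmul]; rfl
  have hg : ∀ x ∈ balRel (Module.End A M) A M U, g x = 0 := by
    intro x hx
    refine Submodule.closure_induction (p := fun x _ => g x = 0) (map_zero g)
      (fun x y _ _ hx hy => by rw [map_add, hx, hy, add_zero]) ?_ hx
    rintro a _ ⟨e, m, u, rfl⟩
    -- `A` commutes with `E` on `M`, so the generating relations are stable under `A`.
    have h1 : a • ((e • m) ⊗ₜ[ℤ] u - m ⊗ₜ[ℤ] (op e • u)) =
        (e (a • m)) ⊗ₜ[ℤ] u - (a • m) ⊗ₜ[ℤ] (op e • u) := by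
      rw [smul_sub, TensorProduct.smul_tmul', TensorProduct.smul_tmul', map_smul]; rfl
    rw [h1, map_sub, sub_eq_zero]
    exact hf e (a • m) u
  exact ⟨QuotientAddGroup.lift (balRel (Module.End A M) A M U).toAddSubgroup g hg, fun u m => rfl⟩

/-- The bijectivity of `ψ`, for an `A`-module `M` which is generated by the image of
`ι : V → M` and has the extension property of the induced module (`hlift`), and whose restriction
to `B` is `V^n`. The ring map `β` plays the role of the inclusion of `B` in `A`. -/
theorem psiMap_bijective_of_coordinates
    (k : Type*) [Field k] [IsAlgClosed k]
    (A B : Type*) [Ring A] [Algebra k A] [Ring B] [Algebra k B] (β : B →ₐ[k] A)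
    (V : Type*) [AddCommGroup V] [Module k V] [Module B V] [IsScalarTower k B V]
    [FiniteDimensional k V] [IsSimpleModule B V]
    (M : Type*) [AddCommGroup M] [Module A M] [Module B M] [Module k M]
    [IsScalarTower k A M] [SMulCommClass A k M]
    (hB : ∀ (b : B) (m : M), b • m = β b • m)
    (ι : V →ₗ[B] M) (hspan : Submodule.span A (Set.range ι) = ⊤)
    (hlift : ∀ j : V →ₗ[B] M, ∃ J : Module.End A M, ∀ v, J (ι v) = j v)
    (n : ℕ) (φ : M ≃ₗ[B] (Fin n → V))
    (U : Type*) [AddCommGroup U] [Module (Module.End A M)ᵐᵒᵖ U]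
    [Module k U] [FiniteDimensional k U]
    (htower : ∀ (c : k) (e : (Module.End A M)ᵐᵒᵖ) (u : U), (c • e) • u = c • (e • u)) :
    Function.Bijective (psiMap A M U) := by
  have hk : ∀ (g : V →ₗ[B] M) (c : k) (v : V), g (c • v) = c • g v := fun g c v => by
    rw [← algebraMap_smul B c v, map_smul, hB, β.commutes, algebraMap_smul]
  let j : Fin n → V →ₗ[B] M := fun i => φ.symm.toLinearMap ∘ₗ LinearMap.single B (fun _ => V) i
  let p : Fin n → M →ₗ[B] V := fun i => LinearMap.proj i ∘ₗ φ.toLinearMap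
  have hjp : ∀ m, ∑ i, j i (p i m) = m := fun m => by
    refine φ.injective ?_
    rw [map_sum]
    refine Eq.trans (Finset.sum_congr rfl fun i _ => φ.apply_symm_apply _) ?_
    exact LinearMap.sum_single_apply (φ := fun _ => V) (φ m)
  choose J hJ using fun i => hlift (j i)
  have hJp : ∀ m, ∑ i, J i (ι (p i m)) = m := fun m => by simp only [hJ, hjp]
  -- By Schur's lemma, a `B`-linear map `V → M` has scalar coordinates with respect to the `j i`.
  have hcoord : ∀ f : V →ₗ[B] M, ∃ c : Fin n → k, ∀ v, (∀ i, p i (f v) = c i • v) ∧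
      f v = ∑ i, c i • J i (ι v) := fun f => by
    choose c hc using fun i => schur_scalar k (p i ∘ₗ f)
    refine ⟨c, fun v => ⟨fun i => hc i v, ?_⟩⟩
    rw [← hjp (f v)]
    refine Finset.sum_congr rfl fun i _ => ?_
    rw [hJ, ← hk]
    exact congrArg _ (hc i v)
  have hsmul : ∀ (c : Fin n → k) (u : U),
      op (∑ i, c i • J i) • u = ∑ i, c i • (op (J i) • u) := fun c u => by
    rw [Finset.op_sum, Finset.sum_smul]
    exact Finset.sum_congr rfl fun i _ => by rw [op_smul, htower]
  -- The contraction `θ μ` of `M ⊗_E U ≅ V ⊗_k U` against the functional `μ`, with values in `V`.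
  have htheta : ∀ μ : U →ₗ[k] k, ∃ F : BalT (Module.End A M) A M U →+ V,
      ∀ u m, F (psiMap A M U u m) = ∑ i, μ (op (J i) • u) • p i m := fun μ => by
    let f : M →+ U →+ V := AddMonoidHom.mk' (fun m => AddMonoidHom.mk'
      (fun u => ∑ i, μ (op (J i) • u) • p i m)
      (fun u u' => by simp only [smul_add, map_add, add_smul, Finset.sum_add_distrib]))
      (fun m m' => by ext u; simp [smul_add, Finset.sum_add_distrib])
    refine balT_exists_lift f fun e m u => ?_
    change ∑ i, μ (op (J i) • u) • p i (e m) = ∑ l, μ (op (J l) • op e • u) • p l m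
    choose c hc using fun l => hcoord
      { toFun := fun v => e (j l v)
        map_add' := fun v w => by simp only [map_add]
        map_smul' := fun b v => by
          rw [map_smul, hB, map_smul, RingHom.id_apply, hB] }
    -- Both sides of the balancing condition are computed by the matrix `c` of `e`.
    have h1 : ∀ i, p i (e m) = ∑ l, c l i • p l m := fun i => by
      conv_lhs => rw [← hjp m]
      rw [map_sum, map_sum]
      exact Finset.sum_congr rfl fun l _ => (hc l (p l m)).1 i
    have h2 : ∀ l, op (J l) • op e • u = ∑ i, c l i • (op (J i) • u) := fun l => by
      rw [← hsmul, smul_smul, ← op_mul]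
      congr 2
      refine LinearMap.ext_on_range hspan fun v => ?_
      rw [LinearMap.sum_apply]
      refine Eq.trans ?_ (hc l v).2
      exact congrArg e (hJ l v)
    simp only [h1, h2, map_sum, Finset.smul_sum, Finset.sum_smul, map_smul, smul_eq_mul]
    rw [Finset.sum_comm]
    refine Finset.sum_congr rfl fun l _ => Finset.sum_congr rfl fun i _ => ?_
    rw [smul_smul, mul_comm]
  choose θ hθ using htheta
  have hθB : ∀ μ (b : B) x, θ μ (β b • x) = b • θ μ x := fun μ b x => by
    refine balT_induction (P := fun x => θ μ (β b • x) = b • θ μ x) ?_ ?_ ?_ x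
    · simp
    · intro x y hx hy
      rw [smul_add, map_add, hx, hy, map_add, smul_add]
    · intro u m
      rw [← map_smul, hθ, hθ, ← hB, Finset.smul_sum]
      refine Finset.sum_congr rfl fun i _ => ?_
      rw [(p i).map_smul, smul_comm]
  have hθι : ∀ μ u v, θ μ (psiMap A M U u (ι v)) = μ u • v := fun μ u v => by
    obtain ⟨c, hc⟩ := hcoord ι
    -- The coordinates of `ι` itself express `1 ∈ E` through the `J i`.
    have h1 : ∑ i, c i • J i = 1 := LinearMap.ext_on_range hspan fun v => by
      rw [LinearMap.sum_apply]
      exact (hc v).2.symm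
    have h2 := hsmul c u
    rw [h1, op_one, one_smul] at h2
    rw [hθ]
    conv_rhs => rw [h2, map_sum, Finset.sum_smul]
    refine Finset.sum_congr rfl fun i _ => ?_
    rw [(hc v).1 i, smul_smul, μ.map_smul, smul_eq_mul, mul_comm]
  have hψk : ∀ (c : k) u v, psiMap A M U u (ι (c • v)) = psiMap A M U (c • u) (ι v) :=
    fun c u v => by
      have := balT_relation A M U (c • 1) (ι v) u
      rw [op_smul, htower, op_one, one_smul] at this
      rw [← this, hk]; rfl
  constructor
  · refine (injective_iff_map_eq_zero (psiAddHom A M U)).2 fun u hu => ?_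
    have : Nontrivial V := IsSimpleModule.nontrivial B V
    obtain ⟨v, hv⟩ := exists_ne (0 : V)
    refine (Module.forall_dual_apply_eq_zero_iff k u).1 fun μ => ?_
    have h := hθι μ u v
    have hu' : psiMap A M U u = 0 := hu
    rw [hu', LinearMap.zero_apply, map_zero] at h
    exact (smul_eq_zero.1 h.symm).resolve_right hv
  · intro g
    let b := Module.finBasis k U
    -- Expansion along the basis `b` of `U`: every element of `M ⊗_E U` is a sum of terms
    -- `ι v ⊗ b a`, with the components `v` given by the contractions.
    have hexp : ∀ x, ∑ a, psiMap A M U (b a) (ι (θ (b.coord a) x)) = x := by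
      refine balT_induction ?_ ?_ ?_
      · simp
      · intro x y hx hy
        simp only [map_add, Finset.sum_add_distrib, hx, hy]
      · intro u m
        simp only [hθ, map_sum, hψk]
        rw [Finset.sum_comm]
        conv_rhs => rw [← hJp m, map_sum]
        refine Finset.sum_congr rfl fun i _ => ?_
        rw [balT_relation]
        conv_rhs => rw [← b.sum_repr (op (J i) • u)]
        change _ = psiAddHom A M U _ _
        rw [map_sum, LinearMap.sum_apply]
        rfl
    -- The components of `g ∘ ι` are `B`-endomorphisms of `V`, hence scalars.
    choose c hc using fun a => schur_scalar k (R := B) (V := V)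
      { toFun := fun v => θ (b.coord a) (g (ι v))
        map_add' := fun v w => by simp only [map_add]
        map_smul' := fun r v => by rw [map_smul, hB, map_smul, hθB]; rfl }
    refine ⟨∑ a, c a • b a, LinearMap.ext_on_range hspan fun v => ?_⟩
    rw [← hexp (g (ι v))]
    change psiAddHom A M U _ _ = _
    rw [map_sum, LinearMap.sum_apply]
    refine Finset.sum_congr rfl fun a _ => ?_
    refine (hψk (c a) (b a) v).symm.trans ?_
    rw [← hc a v]; rfl

theorem ind_span {R S : Type*} [Ring R] [Ring S] (f : R →+* S)
    (V : Type*) [AddCommGroup V] [Module R V] :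
    Submodule.span S (Set.range (Ind.of f V)) = ⊤ := by
  refine eq_top_iff.2 fun x _ => ?_
  obtain ⟨t, rfl⟩ := Submodule.mkQ_surjective (indRel f V) x
  induction t using TensorProduct.induction_on with
  | zero => rw [map_zero]; exact zero_mem _
  | tmul s v =>
    have h : (indRel f V).mkQ (s ⊗ₜ[ℤ] v) = s • Ind.of f V v := by
      refine Eq.trans ?_ ((indRel f V).mkQ.map_smul s ((1 : S) ⊗ₜ[ℤ] v))
      rw [TensorProduct.smul_tmul', smul_eq_mul, mul_one]
    rw [h]
    exact Submodule.smul_mem _ _ (Submodule.subset_span ⟨v, rfl⟩)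
  | add x y hx hy => rw [map_add]; exact add_mem (hx trivial) (hy trivial)

theorem ind_of_smul {R S : Type*} [Ring R] [Ring S] (f : R →+* S)
    (V : Type*) [AddCommGroup V] [Module R V] (r : R) (v : V) :
    Ind.of f V (r • v) = f r • Ind.of f V v := by
  refine Eq.trans ?_ ((indRel f V).mkQ.map_smul (f r) ((1 : S) ⊗ₜ[ℤ] v))
  rw [TensorProduct.smul_tmul', smul_eq_mul, mul_one]
  have h : f r ⊗ₜ[ℤ] v - (1 : S) ⊗ₜ[ℤ] (r • v) ∈ indRel f V :=
    Submodule.subset_span ⟨1, r, v, by rw [one_mul]⟩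
  exact ((Submodule.Quotient.eq _).2 h).symm

theorem ind_of_add {R S : Type*} [Ring R] [Ring S] (f : R →+* S)
    (V : Type*) [AddCommGroup V] [Module R V] (v w : V) :
    Ind.of f V (v + w) = Ind.of f V v + Ind.of f V w :=
  congrArg (indRel f V).mkQ (TensorProduct.tmul_add 1 v w)

/-- Frobenius reciprocity: a homomorphism over `R` from `V` to an `S`-module extends to the induced
module. -/
theorem ind_exists_lift {R S : Type*} [Ring R] [Ring S] (f : R →+* S)
    {V N : Type*} [AddCommGroup V] [Module R V] [AddCommGroup N] [Module S N]
    (j : V →+ N) (hj : ∀ r v, j (r • v) = f r • j v) :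
    ∃ J : Ind f V →ₗ[S] N, ∀ v, J (Ind.of f V v) = j v := by
  let g : S ⊗[ℤ] V →ₗ[S] N := TensorProduct.AlgebraTensorModule.lift
    { toFun := fun s => s • j.toIntLinearMap
      map_add' := fun s t => add_smul _ _ _
      map_smul' := fun s t => mul_smul _ _ _ }
  have hg : ∀ s v, g (s ⊗ₜ v) = s • j v := fun s v => rfl
  refine ⟨Submodule.liftQ (indRel f V) g ?_, fun v => ?_⟩
  · rw [indRel, Submodule.span_le]
    rintro x ⟨s, b, v, rfl⟩
    rw [SetLike.mem_coe, LinearMap.mem_ker, map_sub, hg, hg, hj, mul_smul, sub_self]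
  · exact (hg 1 v).trans (one_smul _ _)

/-- Let `k` be algebraically closed, `B ⊆ A` algebras over `k`,
`V` a finite-dimensional simple `A`-stable `B`-module, `M = V↑^A`,
`E = End_A(M)ᵒᵖ`.  Every finite-dimensional left `E`-module `U` (with a
compatible `k`-structure) is static with respect to `M`: the canonical map
`ψ : U → Hom_A(M, M ⊗_E U)`, `ψ(u)(m) = m ⊗ u`, is bijective and `E`-linear,
hence an isomorphism of `E`-modules. -/
theorem stmt_7 (k : Type*) [Field k] [IsAlgClosed k]
    (A : Type*) [Ring A] [Algebra k A] (B : Subalgebra k A)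
    (V : Type*) [AddCommGroup V] [Module k V] [Module ↥B V] [IsScalarTower k ↥B V]
    [FiniteDimensional k V] [IsSimpleModule ↥B V]
    (hstable : ∃ n : ℕ, Nonempty ((Ind B.val.toRingHom V) ≃ₗ[↥B] (Fin n → V)))
    (U : Type*) [AddCommGroup U] [Module (Module.End A (Ind B.val.toRingHom V))ᵐᵒᵖ U]
    [Module k U] [FiniteDimensional k U]
    (htower : ∀ (c : k) (e : (Module.End A (Ind B.val.toRingHom V))ᵐᵒᵖ) (u : U),
      (c • e) • u = c • (e • u)) :
    Function.Bijective (psiMap A (Ind B.val.toRingHom V) U) ∧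
      ∀ (e : (Module.End A (Ind B.val.toRingHom V))ᵐᵒᵖ) (u : U),
        psiMap A (Ind B.val.toRingHom V) U (e • u)
          = e • psiMap A (Ind B.val.toRingHom V) U u := by
  refine ⟨?_, psiMap_smul _ _ _⟩
  obtain ⟨n, ⟨φ⟩⟩ := hstable
  have hB : ∀ (b : B) (m : Ind B.val.toRingHom V), b • m = (b : A) • m := fun b m => by
    rfl
  let ι : V →ₗ[B] Ind B.val.toRingHom V :=
    { toFun := Ind.of B.val.toRingHom V
      map_add' := ind_of_add _ _
      map_smul' := fun b v => (ind_of_smul _ _ b v).trans (hB b _).symm }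
  exact psiMap_bijective_of_coordinates k A B B.val V (Ind B.val.toRingHom V) hB ι
    (ind_span _ _)
    (fun j => ind_exists_lift _ j.toAddMonoidHom fun b v => (j.map_smul b v).trans (hB b _))
    n φ U htower
end
end

section
/- Let k be an algebraically closed field, B ⊂ A algebras over k, V a finite-dimensional simple A-stable B-module, and E = End_A(V↑^A)^op. For any finite-dimensional left E-module U, there is an isomorphism of B-modules V↑^A ⊗_E U ≅ V ⊗_k U, where B acts only on the left factor of V ⊗_k U; in particular dim_k(V↑^A ⊗_E U) = (dim_k V)(dim_k U). -/
/-!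
Write `M` for the induced module. A `B`-isomorphism `M ≃ Vⁿ` amounts to `B`-linear projections
`p i : M → V` and inclusions `q i : V → M`. By the universal property of induction, `q i` extends to
an `A`-endomorphism `e i` of `M` with `e i (1 ⊗ v) = q i v`, so that `m = ∑ i, e i (1 ⊗ p i m)`.
By Schur's lemma every `B`-endomorphism of `V` is a scalar. Hence the `B`-linear map
`V ⊗[k] U → M ⊗_E U`, `v ⊗ u ↦ (1 ⊗ v) ⊗ u`, has the inverse `m ⊗ u ↦ ∑ i, p i m ⊗ (e i • u)`:
for `s ∈ End_A M` the maps `p i ∘ s ∘ q j` are scalars `c i j`, and both `p i (s m) = ∑ j, c i j • p j m`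
and `s ∘ e j = ∑ i, c i j • e i`, which makes the inverse balanced over `E`.
The equality of dimensions follows, as `B`-linear maps are `k`-linear.
-/


open TensorProduct Pointwise MulOpposite

set_option synthInstance.maxHeartbeats 1000000
set_option maxHeartbeats 2000000

noncomputable section

/-! ### Universal property of the induced module -/

section Induced

variable {Bc Sc : Type*} [Ring Bc] [Ring Sc] (f : Bc →+* Sc)
variable {V : Type*} [AddCommGroup V] [Module Bc V]

theorem Ind.mk_eq_smul_of (s : Sc) (v : V) : Ind.mk f V s v = s • Ind.of f V v := by
  change _ = Submodule.Quotient.mk (s • ((1 : Sc) ⊗ₜ[ℤ] v))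
  rw [TensorProduct.smul_tmul', smul_eq_mul, mul_one]
  rfl

theorem Ind.of_add (v w : V) : Ind.of f V (v + w) = Ind.of f V v + Ind.of f V w := by
  change Submodule.Quotient.mk ((1 : Sc) ⊗ₜ[ℤ] (v + w)) = _
  rw [TensorProduct.tmul_add]
  rfl

theorem Ind.of_smul (b : Bc) (v : V) : Ind.of f V (b • v) = f b • Ind.of f V v := by
  rw [← Ind.mk_eq_smul_of]
  symm
  refine (Submodule.Quotient.eq _).2 (Submodule.subset_span ⟨1, b, v, ?_⟩)
  rw [one_mul]

theorem Ind.hom_ext {N : Type*} [AddCommGroup N] [Module Sc N] {g h : Ind f V →ₗ[Sc] N}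
    (H : ∀ v, g (Ind.of f V v) = h (Ind.of f V v)) : g = h := by
  ext x
  obtain ⟨x, rfl⟩ := Submodule.Quotient.mk_surjective _ x
  induction x using TensorProduct.induction_on with
  | zero => exact (map_zero g).trans (map_zero h).symm
  | tmul s v =>
    change g (Ind.mk f V s v) = h (Ind.mk f V s v)
    rw [Ind.mk_eq_smul_of, map_smul, map_smul, H]
  | add x y hx hy =>
    have e : (Submodule.Quotient.mk (x + y) : Ind f V)
      = (Submodule.Quotient.mk x : Ind f V) + (Submodule.Quotient.mk y : Ind f V) := rfl
    exact (congrArg g e).trans ((map_add g _ _).trans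
      ((congrArg₂ (· + ·) hx hy).trans ((map_add h _ _).symm.trans (congrArg h e).symm)))

/-- Universal property of induction: an additive map on `V` that is semilinear along `f` extends to
the induced module. -/
theorem Ind.exists_lift {N : Type*} [AddCommGroup N] [Module Sc N] (q : V →+ N)
    (hq : ∀ (b : Bc) (v : V), q (b • v) = f b • q v) :
    ∃ g : Ind f V →ₗ[Sc] N, ∀ v, g (Ind.of f V v) = q v := by
  let F : (Sc ⊗[ℤ] V) →ₗ[Sc] N :=
    TensorProduct.AlgebraTensorModule.lift
      ((LinearMap.toSpanSingleton Sc (V →ₗ[ℤ] N) q.toIntLinearMap))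
  have hF : ∀ s v, F (s ⊗ₜ[ℤ] v) = s • q v := fun s v => rfl
  refine ⟨Submodule.liftQ _ F ?_, fun v => ?_⟩
  · rw [indRel, Submodule.span_le]
    rintro x ⟨s, b, v, rfl⟩
    simp only [SetLike.mem_coe, LinearMap.mem_ker, map_sub, hF, hq, mul_smul, sub_self]
  · exact (hF 1 v).trans (one_smul _ _)

end Induced

/-! ### Universal property of the balanced tensor product -/

section Balanced

variable {S : Type*} [Ring S] {Amb : Type*} [Ring Amb]
variable {M U : Type*} [AddCommGroup M] [AddCommGroup U]
variable [Module S M] [Module Amb M] [Module Sᵐᵒᵖ U]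

theorem BalT.mk_add_left (m m' : M) (u : U) :
    BalT.mk S Amb M U (m + m') u = BalT.mk S Amb M U m u + BalT.mk S Amb M U m' u := by
  change Submodule.Quotient.mk ((m + m') ⊗ₜ[ℤ] u) = _
  rw [TensorProduct.add_tmul]
  rfl

theorem BalT.mk_add_right (m : M) (u u' : U) :
    BalT.mk S Amb M U m (u + u') = BalT.mk S Amb M U m u + BalT.mk S Amb M U m u' := by
  change Submodule.Quotient.mk (m ⊗ₜ[ℤ] (u + u')) = _
  rw [TensorProduct.tmul_add]
  rfl

theorem BalT.mk_smul_left (a : Amb) (m : M) (u : U) :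
    BalT.mk S Amb M U (a • m) u = a • BalT.mk S Amb M U m u := rfl

theorem BalT.mk_smul (s : S) (m : M) (u : U) :
    BalT.mk S Amb M U (s • m) u = BalT.mk S Amb M U m (MulOpposite.op s • u) :=
  (Submodule.Quotient.eq _).2 (Submodule.subset_span ⟨s, m, u, rfl⟩)

theorem BalT.mk_sum_left {ι : Type*} (t : Finset ι) (m : ι → M) (u : U) :
    BalT.mk S Amb M U (∑ i ∈ t, m i) u = ∑ i ∈ t, BalT.mk S Amb M U (m i) u :=
  map_sum (AddMonoidHom.mk' (fun m => BalT.mk S Amb M U m u) fun m m' => BalT.mk_add_left m m' u) _ _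

theorem BalT.addHom_ext {N : Type*} [AddCommGroup N] {g h : BalT S Amb M U →+ N}
    (H : ∀ m u, g (BalT.mk S Amb M U m u) = h (BalT.mk S Amb M U m u)) : g = h := by
  ext x
  obtain ⟨x, rfl⟩ := Submodule.Quotient.mk_surjective _ x
  induction x using TensorProduct.induction_on with
  | zero => exact (map_zero g).trans (map_zero h).symm
  | tmul m u => exact H m u
  | add x y hx hy =>
    have e : (Submodule.Quotient.mk (x + y) : BalT S Amb M U)
      = (Submodule.Quotient.mk x : BalT S Amb M U)
        + (Submodule.Quotient.mk y : BalT S Amb M U) := rfl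
    exact (congrArg g e).trans ((map_add g _ _).trans
      ((congrArg₂ (· + ·) hx hy).trans ((map_add h _ _).symm.trans (congrArg h e).symm)))

/-- Universal property of the balanced tensor product for additive maps. The commutation of the two
actions on `M` makes the additive span of the balancing relations stable under `Amb`. -/
theorem BalT.exists_lift [SMulCommClass S Amb M] {N : Type*} [AddCommGroup N]
    (F : M →+ U →+ N) (hF : ∀ (s : S) m u, F (s • m) u = F m (MulOpposite.op s • u)) :
    ∃ g : BalT S Amb M U →+ N, ∀ m u, g (BalT.mk S Amb M U m u) = F m u := by
  let F' : M ⊗[ℤ] U →+ N := TensorProduct.liftAddHom F (fun r m u => by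
    rw [map_zsmul, map_zsmul]; rfl)
  have hF' : ∀ m u, F' (m ⊗ₜ[ℤ] u) = F m u := fun m u => rfl
  have key : ∀ x ∈ balRel S Amb M U, ∀ a : Amb, F' (a • x) = 0 := by
    intro x hx
    induction hx using Submodule.span_induction with
    | mem x hx =>
      obtain ⟨s, m, u, rfl⟩ := hx
      intro a
      rw [smul_sub, map_sub, TensorProduct.smul_tmul', TensorProduct.smul_tmul', hF', hF',
        ← smul_comm s a m, hF, sub_self]
    | zero => intro a; rw [smul_zero, map_zero]
    | add x y _ _ hx hy => intro a; rw [smul_add, map_add, hx, hy, add_zero]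
    | smul b x _ hx => intro a; rw [← mul_smul, hx]
  exact ⟨QuotientAddGroup.lift (balRel S Amb M U).toAddSubgroup F' (fun x hx => by
    simpa using key x hx 1), fun m u => rfl⟩

end Balanced

/-! ### Tensoring the induced module with an `E`-module -/

/-- Let `k` be algebraically closed, `B ⊆ A` algebras over `k`,
`V` a finite-dimensional simple `A`-stable `B`-module, `E = End_A(V↑^A)ᵒᵖ`.
For any finite-dimensional left `E`-module `U` (with compatible `k`-structure),
`V↑^A ⊗_E U ≅ V ⊗_k U` as `B`-modules, where `B` acts only on the left factor
of `V ⊗_k U`; in particular `dim_k (V↑^A ⊗_E U) = (dim_k V)·(dim_k U)`. -/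
theorem stmt_9 (k : Type*) [Field k] [IsAlgClosed k]
    (A : Type*) [Ring A] [Algebra k A] (B : Subalgebra k A)
    (V : Type*) [AddCommGroup V] [Module k V] [Module ↥B V] [IsScalarTower k ↥B V]
    [FiniteDimensional k V] [IsSimpleModule ↥B V]
    (hstable : ∃ n : ℕ, Nonempty ((Ind B.val.toRingHom V) ≃ₗ[↥B] (Fin n → V)))
    (U : Type*) [AddCommGroup U] [Module (Module.End A (Ind B.val.toRingHom V))ᵐᵒᵖ U]
    [Module k U] [FiniteDimensional k U]
    (htower : ∀ (c : k) (e : (Module.End A (Ind B.val.toRingHom V))ᵐᵒᵖ) (u : U),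
      (c • e) • u = c • (e • u)) :
    Nonempty
      ((BalT (Module.End A (Ind B.val.toRingHom V)) A (Ind B.val.toRingHom V) U)
        ≃ₗ[↥B] (V ⊗[k] U)) ∧
    Module.finrank k
        (BalT (Module.End A (Ind B.val.toRingHom V)) A (Ind B.val.toRingHom V) U)
      = Module.finrank k V * Module.finrank k U := by
  obtain ⟨n, ⟨φ⟩⟩ := hstable
  have schur : ∀ g : V →ₗ[↥B] V, ∃ c : k, ∀ v, g v = c • v := by
    intro g
    obtain ⟨c, hc⟩ :=
      (IsSimpleModule.algebraMap_end_bijective_of_isAlgClosed (A := ↥B) (V := V) k).2 g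
    exact ⟨c, fun v => by rw [← hc]; rfl⟩
  let p : Fin n → Ind B.val.toRingHom V →ₗ[↥B] V := fun i => LinearMap.proj i ∘ₗ φ.toLinearMap
  let q : Fin n → V →ₗ[↥B] Ind B.val.toRingHom V := fun i => φ.symm.toLinearMap ∘ₗ LinearMap.single ↥B (fun _ => V) i
  -- `Vⁿ ≃ M` transports `w = ∑ i, single i (w i)`.
  have hpq : ∀ m, m = ∑ i, q i (p i m) := by
    intro m
    apply φ.injective
    rw [map_sum]
    simp only [p, q, LinearMap.comp_apply, LinearEquiv.coe_coe, LinearEquiv.apply_symm_apply,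
      LinearMap.proj_apply, LinearMap.coe_single]
    exact (Finset.univ_sum_single _).symm
  have hex : ∀ i, ∃ g : Module.End A (Ind B.val.toRingHom V), ∀ v, g (Ind.of B.val.toRingHom V v) = q i v := fun i =>
    Ind.exists_lift B.val.toRingHom (q i).toAddMonoidHom (fun b v => (q i).map_smul b v)
  choose e he using hex
  have hpe : ∀ m, m = ∑ i, e i (Ind.of B.val.toRingHom V (p i m)) := by
    intro m
    simp only [he]
    exact hpq m
  let ofB : V →ₗ[↥B] Ind B.val.toRingHom V :=
    { toFun := Ind.of B.val.toRingHom V, map_add' := Ind.of_add B.val.toRingHom, map_smul' := Ind.of_smul B.val.toRingHom }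
  have smul_op : ∀ (c : k) (g : Module.End A (Ind B.val.toRingHom V)) (u : U),
      MulOpposite.op (c • g) • u = c • (MulOpposite.op g • u) := fun c g u =>
    htower c (MulOpposite.op g) u
  have smul_sum : ∀ (g : Fin n → Module.End A (Ind B.val.toRingHom V)) (u : U),
      MulOpposite.op (∑ i, g i) • u = ∑ i, MulOpposite.op (g i) • u := fun g u => by
    rw [← MulOpposite.opAddEquiv_apply, map_sum, Finset.sum_smul]
  have smulI : ∀ (c : k) (x : Ind B.val.toRingHom V), (algebraMap k ↥B c) • x = c • x := by
    intro c x
    rw [← smul_one_smul A (algebraMap k ↥B c) x, algebraMap_smul, smul_one_smul]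
  have smulT : ∀ (c : k) (x : BalT (Module.End A (Ind B.val.toRingHom V)) A (Ind B.val.toRingHom V) U),
      (algebraMap k ↥B c) • x = c • x := by
    intro c x
    rw [← smul_one_smul A (algebraMap k ↥B c) x, algebraMap_smul, smul_one_smul]
  have smulB : ∀ (c : k) (v : V), c • v = (algebraMap k ↥B c) • v := fun c v =>
    (algebraMap_smul ↥B c v).symm
  have q_smul : ∀ i (c : k) (v : V), q i (c • v) = c • q i v := by
    intro i c v
    rw [smulB, map_smul, smulI]
  have of_smul : ∀ (c : k) (v : V), Ind.of B.val.toRingHom V (c • v) = c • Ind.of B.val.toRingHom V v := by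
    intro c v
    rw [smulB]
    exact (ofB.map_smul _ v).trans (smulI _ _)
  have tmul_smul : ∀ (c : k) (v : V) (u : U),
      BalT.mk (Module.End A (Ind B.val.toRingHom V)) A (Ind B.val.toRingHom V) U (Ind.of B.val.toRingHom V (c • v)) u
        = BalT.mk _ _ _ _ (Ind.of B.val.toRingHom V v) (c • u) := by
    intro c v u
    have h1 : Ind.of B.val.toRingHom V (c • v) = (c • (1 : Module.End A (Ind B.val.toRingHom V))) • Ind.of B.val.toRingHom V v := of_smul c v
    rw [h1, BalT.mk_smul, smul_op, MulOpposite.op_one, one_smul]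
  -- Any `A`-endomorphism whose composite with `v ↦ 1 ⊗ v` has scalar coordinates `c i` is
  -- `∑ i, c i • e i`.
  have comb : ∀ (g : Module.End A (Ind B.val.toRingHom V)) (c : Fin n → k),
      (∀ i v, p i (g (Ind.of B.val.toRingHom V v)) = c i • v) → g = ∑ i, c i • e i := by
    intro g c hc
    refine Ind.hom_ext B.val.toRingHom fun v => ?_
    rw [LinearMap.sum_apply, hpq (g (Ind.of B.val.toRingHom V v))]
    refine Finset.sum_congr rfl fun i _ => ?_
    rw [hc, q_smul, LinearMap.smul_apply, he]
  let G : Ind B.val.toRingHom V →+ U →+ V ⊗[k] U :=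
    AddMonoidHom.mk' (fun m => AddMonoidHom.mk'
      (fun u => ∑ i, p i m ⊗ₜ[k] (MulOpposite.op (e i) • u))
      (fun u u' => by
        simp only [smul_add, TensorProduct.tmul_add, Finset.sum_add_distrib]))
      (fun m m' => by
        ext u
        simp only [map_add, TensorProduct.add_tmul, Finset.sum_add_distrib,
          AddMonoidHom.mk'_apply, AddMonoidHom.add_apply])
  have hG : ∀ m u, G m u = ∑ i, p i m ⊗ₜ[k] (MulOpposite.op (e i) • u) := fun m u => rfl
  have hGbal : ∀ (s : Module.End A (Ind B.val.toRingHom V)) m u, G (s • m) u = G m (MulOpposite.op s • u) := by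
    intro s m u
    have hc : ∀ j i, ∃ c : k, ∀ v, p i (s (e j (Ind.of B.val.toRingHom V v))) = c • v := by
      intro j i
      let sB : Ind B.val.toRingHom V →ₗ[↥B] Ind B.val.toRingHom V := s.restrictScalars ↥B
      obtain ⟨c, hc⟩ := schur (p i ∘ₗ sB ∘ₗ q j)
      exact ⟨c, fun v => by rw [← hc, he]; rfl⟩
    choose c hc using hc
    have h1 : ∀ i, p i (s m) = ∑ j, c j i • p j m := by
      intro i
      conv_lhs => rw [hpe m]
      rw [map_sum, map_sum]
      exact Finset.sum_congr rfl fun j _ => hc j i _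
    have h2 : ∀ j, s * e j = ∑ i, c j i • e i := fun j => comb _ _ fun i v => hc j i v
    rw [hG, hG, Module.End.smul_def]
    simp only [← mul_smul, ← MulOpposite.op_mul, h2, smul_sum, h1, smul_op, TensorProduct.sum_tmul,
      TensorProduct.tmul_sum, TensorProduct.smul_tmul]
    exact Finset.sum_comm
  obtain ⟨Ψ, hΨ⟩ := BalT.exists_lift (Amb := A) G hGbal
  let Φ : V ⊗[k] U →+ BalT (Module.End A (Ind B.val.toRingHom V)) A (Ind B.val.toRingHom V) U :=
    TensorProduct.liftAddHom
      (AddMonoidHom.mk' (fun v => AddMonoidHom.mk'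
        (fun u => BalT.mk _ _ _ _ (Ind.of B.val.toRingHom V v) u)
        (fun u u' => BalT.mk_add_right _ u u'))
        (fun v v' => by
          ext u
          simp only [AddMonoidHom.mk'_apply, AddMonoidHom.add_apply, Ind.of_add,
            BalT.mk_add_left]))
      (fun c v u => tmul_smul c v u)
  have hΦ : ∀ v u, Φ (v ⊗ₜ[k] u) = BalT.mk _ _ _ _ (Ind.of B.val.toRingHom V v) u := fun v u => rfl
  have hΨΦ : ∀ x, Ψ (Φ x) = x := by
    intro x
    induction x using TensorProduct.induction_on with
    | zero => rw [map_zero, map_zero]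
    | add x y hx hy => rw [map_add, map_add, hx, hy]
    | tmul v u =>
      choose c hc using fun i => schur (p i ∘ₗ ofB)
      have h1 : (1 : Module.End A (Ind B.val.toRingHom V)) = ∑ i, c i • e i := comb _ _ fun i v => hc i v
      have h2 : ∀ i, p i (Ind.of B.val.toRingHom V v) = c i • v := fun i => hc i v
      rw [hΦ, hΨ, hG]
      simp only [h2, TensorProduct.smul_tmul, ← smul_op]
      rw [← TensorProduct.tmul_sum, ← smul_sum, ← h1, MulOpposite.op_one, one_smul]
  have hΦΨ : ∀ x, Φ (Ψ x) = x := by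
    intro x
    refine DFunLike.congr_fun
      (BalT.addHom_ext (g := Φ.comp Ψ) (h := AddMonoidHom.id _) fun m u => ?_) x
    rw [AddMonoidHom.comp_apply, AddMonoidHom.id_apply, hΨ, hG, map_sum]
    conv_rhs => rw [hpe m, BalT.mk_sum_left]
    refine Finset.sum_congr rfl fun i _ => ?_
    rw [hΦ, ← BalT.mk_smul]
    rfl
  have hΦB : ∀ (b : ↥B) x, Φ (b • x) = b • Φ x := by
    intro b x
    induction x using TensorProduct.induction_on with
    | zero => rw [smul_zero, map_zero, smul_zero]
    | add x y hx hy => rw [smul_add, map_add, map_add, smul_add, hx, hy]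
    | tmul v u =>
      rw [TensorProduct.smul_tmul', hΦ, hΦ, Ind.of_smul, BalT.mk_smul_left]
      rfl
  let L : (V ⊗[k] U) ≃ₗ[↥B] BalT (Module.End A (Ind B.val.toRingHom V)) A (Ind B.val.toRingHom V) U :=
    { Φ with
      map_smul' := hΦB
      invFun := Ψ
      left_inv := hΨΦ
      right_inv := hΦΨ }
  refine ⟨⟨L.symm⟩, ?_⟩
  let Lk : (V ⊗[k] U) ≃ₗ[k] BalT (Module.End A (Ind B.val.toRingHom V)) A (Ind B.val.toRingHom V) U :=
    { L with
      map_smul' := fun c x => by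
        have h := hΦB (algebraMap k ↥B c) x
        rw [smulT, algebraMap_smul] at h
        exact h }
  rw [← Lk.finrank_eq, Module.finrank_tensorProduct]
end
end

section
/- Let k be an algebraically closed field and B ⊂ A algebras over k. Let V be a finite-dimensional simple A-stable B-module and N a finite-dimensional simple A-module such that the restriction N↓_B contains a B-submodule isomorphic to V. Then N↓_B is isomorphic to a direct sum of copies of V. -/
/-!
By the universal property of induction, the embedding of `V` into `N` extends to an `A`-linear map
`V↑^A → N` (`Ind.lift`). It is nonzero because `V ≠ 0`, hence surjective because `N` is simple.
Restricted to `B`, stability makes it a surjection from `V ^ n` onto `N`. Since `V ^ n` is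
semisimple and isotypic of type `V`, so is its quotient `N` (`exists_equiv_fun_of_surjective`).
-/

open TensorProduct Pointwise MulOpposite

set_option synthInstance.maxHeartbeats 1000000
set_option maxHeartbeats 2000000

noncomputable section

/-- The `Sc`-linear extension `V↑ → N`, `s ⊗ v ↦ s • g v`, of an additive map `g : V → N` which is
semilinear along `f`. -/
def Ind.lift {Bc Sc : Type*} [Ring Bc] [Ring Sc] (f : Bc →+* Sc)
    (V : Type*) [AddCommGroup V] [Module Bc V] {N : Type*} [AddCommGroup N] [Module Sc N]
    (g : V →ₛₗ[f] N) : Ind f V →ₗ[Sc] N :=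
  Submodule.liftQ _ (TensorProduct.AlgebraTensorModule.lift
    (LinearMap.toSpanSingleton Sc (V →ₗ[ℤ] N) g.toAddMonoidHom.toIntLinearMap)) (by
    rw [indRel, Submodule.span_le]
    rintro x ⟨s, b, v, rfl⟩
    simp [mul_smul])

theorem Ind.lift_of {Bc Sc : Type*} [Ring Bc] [Ring Sc] (f : Bc →+* Sc)
    (V : Type*) [AddCommGroup V] [Module Bc V] {N : Type*} [AddCommGroup N] [Module Sc N]
    (g : V →ₛₗ[f] N) (v : V) : Ind.lift f V g (Ind.of f V v) = g v :=
  one_smul Sc (g v)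

theorem isIsotypicOfType_fun {R S ι : Type*} [Ring R] [AddCommGroup S] [Module R S]
    [IsSimpleModule R S] : IsIsotypicOfType R (ι → S) S := by
  intro m _
  have := IsSimpleModule.nontrivial R m
  obtain ⟨x, hx⟩ := exists_ne (0 : m)
  obtain ⟨i, hi⟩ : ∃ i, (x : ι → S) i ≠ 0 := by
    by_contra! h
    exact hx (Subtype.ext (funext h))
  -- Some coordinate projection is nonzero on `m`, so Schur's lemma applies to it.
  have h0 : (LinearMap.proj i : (ι → S) →ₗ[R] S) ∘ₗ m.subtype ≠ 0 :=
    fun h => hi (LinearMap.congr_fun h x)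
  exact ⟨.ofBijective _ (LinearMap.bijective_of_ne_zero h0)⟩

/-- A surjection from the semisimple module `S ^ n` splits, which embeds its target in `S ^ n`. -/
theorem exists_equiv_fun_of_surjective {R S N : Type*} [Ring R] [AddCommGroup S] [Module R S]
    [IsSimpleModule R S] [AddCommGroup N] [Module R N] {n : ℕ} (q : (Fin n → S) →ₗ[R] N)
    (hq : Function.Surjective q) : ∃ m : ℕ, Nonempty (N ≃ₗ[R] (Fin m → S)) := by
  have := IsSemisimpleModule.of_surjective q hq
  have := Module.Finite.of_surjective q hq
  obtain ⟨h, hh⟩ := IsSemisimpleModule.lifting_property q hq LinearMap.id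
  have hinj : Function.Injective h :=
    Function.LeftInverse.injective (g := q) (LinearMap.congr_fun hh)
  exact (isIsotypicOfType_fun.of_injective h hinj).linearEquiv_fun

/-- Let `k` be algebraically closed, `B ⊆ A` algebras over
`k`, `V` a finite-dimensional simple `A`-stable `B`-module, and `N` a
finite-dimensional simple `A`-module such that `N↓_B` contains a `B`-submodule
isomorphic to `V`.  Then `N↓_B` is isomorphic to a direct sum of copies of `V`. -/
theorem stmt_10 (k : Type*) [Field k] [IsAlgClosed k]
    (A : Type*) [Ring A] [Algebra k A] (B : Subalgebra k A)
    (V : Type*) [AddCommGroup V] [Module k V] [Module ↥B V] [IsScalarTower k ↥B V]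
    [FiniteDimensional k V] [IsSimpleModule ↥B V]
    (hstable : ∃ n : ℕ, Nonempty ((Ind B.val.toRingHom V) ≃ₗ[↥B] (Fin n → V)))
    (N : Type*) [AddCommGroup N] [Module A N] [Module k N] [IsScalarTower k A N]
    [FiniteDimensional k N] [IsSimpleModule A N]
    (hcontains : ∃ g : V →ₗ[↥B] N, Function.Injective g) :
    ∃ n : ℕ, Nonempty (N ≃ₗ[↥B] (Fin n → V)) := by
  obtain ⟨g, hg⟩ := hcontains
  obtain ⟨n, ⟨e⟩⟩ := hstable
  let g' : V →ₛₗ[B.val.toRingHom] N :=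
    { toFun := g, map_add' := g.map_add, map_smul' := g.map_smul }
  let φ := Ind.lift B.val.toRingHom V g'
  have hφ0 : φ ≠ 0 := by
    intro h
    have := IsSimpleModule.nontrivial B V
    obtain ⟨v, hv⟩ := exists_ne (0 : V)
    have h1 : g v = 0 := (Ind.lift_of B.val.toRingHom V g' v).symm.trans (LinearMap.congr_fun h _)
    exact hv (hg (h1.trans g.map_zero.symm))
  have hφ : Function.Surjective φ := LinearMap.surjective_of_ne_zero hφ0
  let φB : Ind B.val.toRingHom V →ₗ[B] N := φ.restrictScalars B
  exact exists_equiv_fun_of_surjective (φB ∘ₗ e.symm.toLinearMap) (hφ.comp e.symm.surjective)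
end
end
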